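/- arXiv:2209.07847 — 2 statements merged into one kernel-verified Lean document; each statement's English description precedes it below -/
import Mathlib

section
/- Let G be a finite simple graph on [n] and 1 ≤ k ≤ ν(G). Let Γ_k(G) be the simplicial complex on V(G) whose faces are the subsets F ⊆ V(G) containing no vertex set V(M) of a k-matching M of G. Then the following are equivalent: (i) g_{I(G)}(k) = 0, i.e. depth(S/I(G)^{[k]}) = 2k − 1; (ii) the (2k−2)-nd reduced simplicial homology H̃_{2k−2}(Γ_k(G); K) is nonzero. -/
open MvPolynomial

section Preamble

variable (K : Type*) [Field K] {σ : Type*} [Fintype σ] [DecidableEq σ]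

/-- A (monic) monomial of the polynomial ring. -/
def IsMonomial (f : MvPolynomial σ K) : Prop :=
  ∃ d : σ →₀ ℕ, f = monomial d 1

/-- An ideal generated by monomials. -/
def IsMonomialIdeal (I : Ideal (MvPolynomial σ K)) : Prop :=
  ∃ A : Set (MvPolynomial σ K), (∀ u ∈ A, IsMonomial K u) ∧ I = Ideal.span A

/-- The unique minimal set of monomial generators `G(I)` of a monomial ideal:
the monomials of `I` that are minimal with respect to divisibility. -/
def minGens (I : Ideal (MvPolynomial σ K)) : Set (MvPolynomial σ K) :=
  {u | IsMonomial K u ∧ u ∈ I ∧ ∀ v, IsMonomial K v → v ∈ I → v ∣ u → v = u}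

/-- A squarefree monomial ideal. -/
def IsSqfreeMonomialIdeal (I : Ideal (MvPolynomial σ K)) : Prop :=
  IsMonomialIdeal K I ∧ ∀ u ∈ minGens K I, Squarefree u

/-- The `k`-th squarefree power `I^{[k]}`: the ideal generated by the squarefree
products of `k` minimal monomial generators of `I`. -/
noncomputable def sqPow (I : Ideal (MvPolynomial σ K)) (k : ℕ) : Ideal (MvPolynomial σ K) :=
  Ideal.span {u | Squarefree u ∧ ∃ l : List (MvPolynomial σ K),
    l.length = k ∧ (∀ f ∈ l, f ∈ minGens K I) ∧ u = l.prod}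

/-- `ν(I)`: the maximum length of a regular sequence of monomials in `I`. -/
noncomputable def monNu (I : Ideal (MvPolynomial σ K)) : ℕ :=
  sSup {m | ∃ l : List (MvPolynomial σ K), l.length = m ∧
    (∀ f ∈ l, IsMonomial K f ∧ f ∈ I) ∧
    RingTheory.Sequence.IsRegular (MvPolynomial σ K) l}

/-- The minimal degree `d` of a minimal monomial generator of `I`
(so `d_k = minDeg (I^{[k]})`). -/
noncomputable def minDeg (I : Ideal (MvPolynomial σ K)) : ℕ :=
  sInf (totalDegree '' minGens K I)

/-- `depth(S/I)`: the maximum length of an `S/I`-regular sequence of elements of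
the graded maximal ideal `(x_1, …, x_n)`. -/
noncomputable def qdepth (I : Ideal (MvPolynomial σ K)) : ℕ :=
  sSup {m | ∃ l : List (MvPolynomial σ K), l.length = m ∧
    (∀ f ∈ l, f ∈ Ideal.span (Set.range (X : σ → MvPolynomial σ K))) ∧
    RingTheory.Sequence.IsRegular (MvPolynomial σ K ⧸ I) l}

/-- `I` has linear quotients with respect to the ordering `L` of its minimal
monomial generators: each successive colon ideal is generated by variables. -/
def HasLinearQuotientsOrder (I : Ideal (MvPolynomial σ K))
    (L : List (MvPolynomial σ K)) : Prop :=
  L.Nodup ∧ (∀ u, u ∈ L ↔ u ∈ minGens K I) ∧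
  ∀ i : Fin L.length, 0 < (i : ℕ) →
    ∃ A : Set σ,
      Submodule.colon (Ideal.span {u | u ∈ L.take (i : ℕ)}) (Ideal.span {L.get i})
        = Ideal.span (X '' A)

/-- A monomial ideal with linear quotients. -/
def HasLinearQuotients (I : Ideal (MvPolynomial σ K)) : Prop :=
  ∃ L, HasLinearQuotientsOrder K I L

/-- A polymatroidal ideal: a monomial ideal generated in a single degree whose
minimal generators satisfy the exchange property. -/
def IsPolymatroidal (I : Ideal (MvPolynomial σ K)) : Prop :=
  IsMonomialIdeal K I ∧
  (∃ d, ∀ u ∈ minGens K I, totalDegree u = d) ∧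
  ∀ u ∈ minGens K I, ∀ v ∈ minGens K I, ∀ k : σ,
    degreeOf k v < degreeOf k u →
    ∃ l : σ, degreeOf l u < degreeOf l v ∧
      ∃ w, u = X k * w ∧ X l * w ∈ minGens K I

/-- A matroidal ideal: a polymatroidal ideal all of whose minimal generators are
squarefree. -/
def IsMatroidal (I : Ideal (MvPolynomial σ K)) : Prop :=
  IsPolymatroidal K I ∧ ∀ u ∈ minGens K I, Squarefree u

/-- The squarefree part of a monomial ideal: the ideal generated by its squarefree
minimal generators. -/
noncomputable def sqfPart (I : Ideal (MvPolynomial σ K)) : Ideal (MvPolynomial σ K) :=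
  Ideal.span {u | u ∈ minGens K I ∧ Squarefree u}

/-- The squarefree Veronese ideal `𝔪^{[d]}`, generated by all squarefree
monomials of degree `d`. -/
noncomputable def veronese (d : ℕ) : Ideal (MvPolynomial σ K) :=
  Ideal.span {u | ∃ F : Finset σ, F.card = d ∧ u = ∏ i ∈ F, X i}

/-- A chordal graph: no induced cycle of length greater than 3. -/
def IsChordal {V : Type*} (G : SimpleGraph V) : Prop :=
  ∀ m : ℕ, 4 ≤ m → ¬ ∃ f : ZMod m → V, Function.Injective f ∧
    ∀ i j : ZMod m, G.Adj (f i) (f j) ↔ (i = j + 1 ∨ j = i + 1)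

/-- A matching of `G`: a finite set of pairwise vertex-disjoint edges of `G`. -/
def IsMatching (G : SimpleGraph σ) (M : Finset (Sym2 σ)) : Prop :=
  (↑M ⊆ G.edgeSet) ∧ (M : Set (Sym2 σ)).Pairwise fun e f => ∀ v, v ∈ e → v ∉ f

/-- A `k`-matching of `G`. -/
def IsKMatching (G : SimpleGraph σ) (M : Finset (Sym2 σ)) (k : ℕ) : Prop :=
  IsMatching G M ∧ M.card = k

/-- The vertex set `V(M)` of a matching. -/
def mVerts (M : Finset (Sym2 σ)) : Finset σ :=
  Finset.univ.filter fun v => ∃ e ∈ M, v ∈ e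

/-- The squarefree monomial `∏_{v ∈ V(M)} x_v` attached to a matching. -/
noncomputable def matchMon (M : Finset (Sym2 σ)) : MvPolynomial σ K :=
  ∏ v ∈ mVerts M, X v

/-- The edge ideal `I(G)` of a finite simple graph `G`. -/
noncomputable def edgeIdeal (G : SimpleGraph σ) : Ideal (MvPolynomial σ K) :=
  Ideal.span {u | ∃ i j, G.Adj i j ∧ u = X i * X j}

/-- The `k`-th squarefree power `I(G)^{[k]}` of the edge ideal, generated by the
monomials `∏_{v ∈ V(M)} x_v` of the `k`-matchings `M` of `G`. -/
noncomputable def matchPow (G : SimpleGraph σ) (k : ℕ) : Ideal (MvPolynomial σ K) :=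
  Ideal.span {u | ∃ M : Finset (Sym2 σ), IsKMatching G M k ∧ u = matchMon K M}

/-- The matching number `ν(G)`. -/
noncomputable def matchNum (G : SimpleGraph σ) : ℕ :=
  sSup {k | ∃ M : Finset (Sym2 σ), IsKMatching G M k}

end Preamble

/-- The simplicial boundary operator on the free `K`-module with basis all finite
subsets of the (linearly ordered) vertex set; the empty set plays the role of the
`(-1)`-simplex, so that kernels compute *reduced* homology. -/
noncomputable def bnd (K : Type*) [Field K] {σ : Type*} [Fintype σ] [DecidableEq σ]
    [LinearOrder σ] : (Finset σ →₀ K) →ₗ[K] (Finset σ →₀ K) :=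
  Finsupp.lsum K fun s => LinearMap.toSpanSingleton K _
    (∑ v ∈ s, ((-1 : K) ^ ((s.filter (· < v)).card)) • Finsupp.single (s.erase v) (1 : K))

/-- Nonvanishing of the reduced simplicial homology `H̃_j(Δ; K)` of a simplicial
complex `Δ`: there is a `j`-cycle supported on faces of `Δ` (of cardinality `j+1`)
which is not the boundary of a `(j+1)`-chain supported on faces of `Δ`. -/
def homNonzero (K : Type*) [Field K] {σ : Type*} [Fintype σ] [DecidableEq σ]
    [LinearOrder σ] (Δ : Set (Finset σ)) (j : ℕ) : Prop :=
  ∃ c : Finset σ →₀ K, (∀ s ∈ c.support, s ∈ Δ ∧ s.card = j + 1) ∧ bnd K c = 0 ∧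
    ¬ ∃ b : Finset σ →₀ K, (∀ s ∈ b.support, s ∈ Δ ∧ s.card = j + 2) ∧ bnd K b = c

/-- The simplicial complex `Γ_k(G)`, whose faces are the vertex subsets containing
the vertex set of no `k`-matching of `G`; its Stanley–Reisner ideal is `I(G)^{[k]}`. -/
def matchingComplex {σ : Type*} [Fintype σ] [DecidableEq σ]
    (G : SimpleGraph σ) (k : ℕ) : Set (Finset σ) :=
  {F | ¬ ∃ M : Finset (Sym2 σ), IsKMatching G M k ∧ mVerts M ⊆ F}

/-!
The depth of `S/I` is the least degree in which the Koszul cohomology of `x_1, …, x_n` on `S/I` does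
not vanish. For a Stanley–Reisner ring the Koszul complex splits into multigraded strands. The
strand of multidegree `(1, …, 1)` is the reduced simplicial cochain complex of `Δ`. If `Δ` contains
every set of at most `i` vertices and `i < n`, then all the other strands are acyclic in degree `i`:
contraction against a variable occurring in the multidegree is a homotopy from the identity to zero.

Every `k`-matching covers `2k` vertices, so `Γ_k(G)` contains every set of at most `2k - 1`
vertices. The Koszul cohomology of `S/I(G)^{[k]}` is therefore zero below degree `2k - 1`, and in
that degree it is `H̃^{2k-2}(Γ_k(G); K)`, the dual of `H̃_{2k-2}(Γ_k(G); K)`.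
-/

section KoszulComplex

open scoped Finset

variable {σ R M N : Type*} [LinearOrder σ] [CommRing R]
  [AddCommGroup M] [Module R M] [AddCommGroup N] [Module R N]

/-- The sign `(-1)^#{u ∈ s | u < v}` of the face `s \ {v}` of the simplex `s`. -/
def faceSign (R : Type*) [CommRing R] (s : Finset σ) (v : σ) : R :=
  (-1) ^ #{u ∈ s | u < v}

/-- The differential of the Koszul cochain complex of the family `x` with coefficients in `M`.
The function `f : Finset σ → M` collects cochains of all degrees; its degree `i` part consists of
the values at the sets of cardinality `i`. -/
def koszulD (x : σ → R) : (Finset σ → M) →ₗ[R] (Finset σ → M) where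
  toFun f s := ∑ v ∈ s, (faceSign R s v * x v) • f (s.erase v)
  map_add' f g := by ext s; simp [Finset.sum_add_distrib]
  map_smul' r f := by ext s; simp [Finset.smul_sum, smul_comm r]

/-- Contraction of Koszul cochains against the basis vector `v`. It is a homotopy between zero and
multiplication by `x v`. -/
def koszulContract (R : Type*) [CommRing R] {M : Type*} [AddCommGroup M] [Module R M] (v : σ)
    (f : Finset σ → M) (s : Finset σ) : M :=
  if v ∈ s then 0 else faceSign R s v • f (insert v s)

/-- The `i`-th Koszul cohomology of the family `x` with coefficients in `M` vanishes. -/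
def KoszulVanishes (x : σ → R) (M : Type*) [AddCommGroup M] [Module R M] (i : ℕ) : Prop :=
  ∀ f : Finset σ → M, (∀ s, #s = i + 1 → koszulD x f s = 0) →
    ∃ g : Finset σ → M, ∀ s, #s = i → f s = koszulD x g s

lemma koszulD_apply (x : σ → R) (f : Finset σ → M) (s : Finset σ) :
    koszulD x f s = ∑ v ∈ s, (faceSign R s v * x v) • f (s.erase v) := rfl

lemma map_faceSign {S : Type*} [CommRing S] (φ : R →+* S) (s : Finset σ) (v : σ) :
    φ (faceSign R s v) = faceSign S s v := by
  simp only [faceSign, map_pow, map_neg, map_one]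

lemma faceSign_mul_self (s : Finset σ) (v : σ) : faceSign R s v * faceSign R s v = 1 := by
  rw [faceSign, ← mul_pow, neg_one_mul, neg_neg, one_pow]

lemma faceSign_erase_self (s : Finset σ) (v : σ) :
    faceSign R (s.erase v) v = faceSign R s v := by
  rw [faceSign, Finset.filter_erase, Finset.erase_eq_of_notMem (by simp), faceSign]

lemma faceSign_insert_self (s : Finset σ) (v : σ) :
    faceSign R (insert v s) v = faceSign R s v := by
  rw [← faceSign_erase_self, Finset.erase_insert_eq_erase, faceSign_erase_self]

lemma faceSign_eq_faceSign_erase_mul {s : Finset σ} {v : σ} (hv : v ∈ s) (w : σ) :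
    faceSign R s w = faceSign R (s.erase v) w * if v < w then -1 else 1 := by
  unfold faceSign
  split_ifs with hvw
  · rw [← pow_succ, Finset.filter_erase, Finset.card_erase_add_one (by simp [hv, hvw])]
  · rw [Finset.filter_erase, Finset.erase_eq_of_notMem (by simp [hvw]), mul_one]

lemma faceSign_mul_faceSign_erase {s : Finset σ} {v w : σ} (hv : v ∈ s) (hw : w ∈ s)
    (hvw : v ≠ w) :
    faceSign R s v * faceSign R (s.erase v) w = -(faceSign R s w * faceSign R (s.erase w) v) := by
  rw [faceSign_eq_faceSign_erase_mul hv w, faceSign_eq_faceSign_erase_mul hw v]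
  rcases hvw.lt_or_gt with h | h <;> simp only [h, h.not_gt, if_true, if_false] <;> ring

lemma koszulD_koszulD (x : σ → R) (f : Finset σ → M) : koszulD x (koszulD x f) = 0 := by
  ext s
  have expand : koszulD x (koszulD x f) s = ∑ p ∈ s.offDiag,
      (faceSign R s p.1 * faceSign R (s.erase p.1) p.2 * (x p.1 * x p.2)) •
        f ((s.erase p.1).erase p.2) := by
    simp only [koszulD_apply, Finset.smul_sum, smul_smul, mul_mul_mul_comm _ (x _)]
    rw [← Finset.sum_finset_product' s.offDiag s (fun v => s.erase v)]
    grind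
  rw [expand]
  refine Finset.sum_involution (fun p _ => p.swap) ?_ ?_ ?_ fun p _ => p.swap_swap
  · rintro ⟨v, w⟩ hp
    obtain ⟨hv, hw, hvw⟩ := Finset.mem_offDiag.1 hp
    rw [Prod.swap_prod_mk, Finset.erase_right_comm (a := w), ← add_smul,
      faceSign_mul_faceSign_erase hv hw hvw, mul_comm (x w), neg_mul, neg_add_cancel, zero_smul]
  · grind
  · grind

lemma koszulD_koszulContract_of_mem (x : σ → R) (f : Finset σ → M) {v : σ} {s : Finset σ}
    (hv : v ∈ s) : koszulD x (koszulContract R v f) s = x v • f s := by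
  rw [koszulD_apply, Finset.sum_eq_single_of_mem v hv]
  · rw [koszulContract, if_neg (Finset.notMem_erase v s), Finset.insert_erase hv,
      faceSign_erase_self, smul_smul, mul_right_comm, faceSign_mul_self, one_mul]
  · intro w _ hwv
    rw [koszulContract, if_pos (Finset.mem_erase.2 ⟨hwv.symm, hv⟩), smul_zero]

lemma koszulD_koszulContract_of_notMem (x : σ → R) (f : Finset σ → M) {v : σ} {s : Finset σ}
    (hv : v ∉ s) :
    koszulD x (koszulContract R v f) s + faceSign R s v • koszulD x f (insert v s) =
      x v • f s := by
  have leading : (faceSign R s v * (faceSign R s v * x v)) • f s = x v • f s := by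
    rw [← mul_assoc, faceSign_mul_self, one_mul]
  rw [koszulD_apply x f, Finset.sum_insert hv, Finset.erase_insert hv, faceSign_insert_self,
    smul_add, smul_smul, leading, add_left_comm, add_eq_left, koszulD_apply, Finset.smul_sum,
    ← Finset.sum_add_distrib]
  refine Finset.sum_eq_zero fun w hw => ?_
  have hvw : v ≠ w := fun h => hv (h ▸ hw)
  rw [koszulContract, if_neg (fun h => hv (Finset.mem_of_mem_erase h)),
    Finset.erase_insert_of_ne hvw, smul_smul, smul_smul, ← add_smul]
  convert zero_smul R _
  rw [faceSign_eq_faceSign_erase_mul (Finset.mem_insert_self v s), Finset.erase_insert hv,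
    faceSign_eq_faceSign_erase_mul hw v]
  rcases hvw.lt_or_gt with h | h <;> simp only [h, h.not_gt, if_true, if_false] <;> ring

lemma koszulD_koszulContract_eq_smul {x : σ → R} {f : Finset σ → M} {v : σ} {s : Finset σ}
    (hf : v ∉ s → koszulD x f (insert v s) = 0) :
    koszulD x (koszulContract R v f) s = x v • f s := by
  by_cases hv : v ∈ s
  · exact koszulD_koszulContract_of_mem x f hv
  · rw [← koszulD_koszulContract_of_notMem x f hv, hf hv, smul_zero, add_zero]

lemma koszulD_congr (x : σ → R) {f g : Finset σ → M} {i : ℕ} (h : ∀ t, #t = i → f t = g t)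
    {s : Finset σ} (hs : #s = i + 1) : koszulD x f s = koszulD x g s := by
  refine Finset.sum_congr rfl fun v hv => ?_
  rw [h _ (by rw [Finset.card_erase_of_mem hv, hs, Nat.add_sub_cancel])]

lemma koszulD_map (φ : M →ₗ[R] N) (x : σ → R) (f : Finset σ → M) (s : Finset σ) :
    koszulD x (fun t => φ (f t)) s = φ (koszulD x f s) := by
  simp only [koszulD_apply, map_sum, map_smul]

lemma koszulVanishes_quotient_iff (x : σ → R) (P : Submodule R M) (i : ℕ) :
    KoszulVanishes x (M ⧸ P) i ↔
      ∀ f : Finset σ → M, (∀ s, #s = i + 1 → koszulD x f s ∈ P) →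
        ∃ g : Finset σ → M, ∀ s, #s = i → f s - koszulD x g s ∈ P := by
  simp only [← P.ker_mkQ, LinearMap.mem_ker, map_sub, sub_eq_zero, ← koszulD_map]
  have lift (f : Finset σ → M ⧸ P) : ∃ g : Finset σ → M, f = fun s => P.mkQ (g s) :=
    ⟨fun s => (P.mkQ_surjective (f s)).choose,
      funext fun s => (P.mkQ_surjective (f s)).choose_spec.symm⟩
  constructor
  · intro h f hf
    obtain ⟨g, hg⟩ := h _ hf
    obtain ⟨g, rfl⟩ := lift g
    exact ⟨g, hg⟩
  · intro h f hf
    obtain ⟨f, rfl⟩ := lift f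
    obtain ⟨g, hg⟩ := h f hf
    exact ⟨_, hg⟩

lemma exists_smul_eq_koszulD {x : σ → R} {y : R} (hy : y ∈ Ideal.span (Set.range x)) {i : ℕ}
    {f : Finset σ → M} (hf : ∀ s, #s = i + 1 → koszulD x f s = 0) :
    ∃ g : Finset σ → M, ∀ s, #s = i → y • f s = koszulD x g s := by
  induction hy using Submodule.span_induction with
  | mem y hy =>
    obtain ⟨v, rfl⟩ := hy
    refine ⟨koszulContract R v f, fun s hs => (koszulD_koszulContract_eq_smul fun hv => ?_).symm⟩
    exact hf _ (by rw [Finset.card_insert_of_notMem hv, hs])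
  | zero => exact ⟨0, fun s _ => by rw [zero_smul, map_zero, Pi.zero_apply]⟩
  | add a b _ _ ha hb =>
    obtain ⟨g, hg⟩ := ha
    obtain ⟨h, hh⟩ := hb
    exact ⟨g + h, fun s hs => by rw [add_smul, hg s hs, hh s hs, map_add, Pi.add_apply]⟩
  | smul r a _ ha =>
    obtain ⟨g, hg⟩ := ha
    exact ⟨r • g, fun s hs => by rw [smul_assoc, hg s hs, map_smul, Pi.smul_apply]⟩

end KoszulComplex

section KoszulDepth

open scoped Finset Pointwise
open RingTheory.Sequence

variable {σ R M : Type*} [LinearOrder σ] [CommRing R] [AddCommGroup M] [Module R M]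

lemma koszulVanishes_zero_of_isSMulRegular {x : σ → R} {y : R}
    (hy : y ∈ Ideal.span (Set.range x)) (hreg : IsSMulRegular M y) : KoszulVanishes x M 0 := by
  intro f hf
  obtain ⟨_, hg⟩ := exists_smul_eq_koszulD hy hf
  refine ⟨0, fun s hs => hreg ?_⟩
  obtain rfl := Finset.card_eq_zero.1 hs
  simpa only [koszulD_apply, Finset.sum_empty, smul_zero] using hg ∅ hs

lemma koszulVanishes_succ_of_quotSMulTop {x : σ → R} {y : R}
    (hy : y ∈ Ideal.span (Set.range x)) (hreg : IsSMulRegular M y) {i : ℕ}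
    (h : KoszulVanishes x (QuotSMulTop y M) i) : KoszulVanishes x M (i + 1) := by
  intro f hf
  obtain ⟨g, hg⟩ := exists_smul_eq_koszulD hy hf
  obtain ⟨g₁, hg₁⟩ := (koszulVanishes_quotient_iff x _ i).1 h g fun s hs =>
    hg s hs ▸ Submodule.smul_mem_pointwise_smul _ y _ trivial
  simp only [Submodule.mem_smul_pointwise_iff_exists, Submodule.mem_top, true_and] at hg₁
  choose! g₂ hg₂ using hg₁
  refine ⟨g₂, fun s hs => hreg ?_⟩
  calc y • f s = koszulD x g s := hg s hs
    _ = koszulD x (koszulD x g₁ + y • g₂) s := koszulD_congr x (fun t ht => by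
        rw [Pi.add_apply, Pi.smul_apply, hg₂ t ht, add_sub_cancel]) hs
    _ = y • koszulD x g₂ s := by rw [map_add, koszulD_koszulD, zero_add, map_smul, Pi.smul_apply]

lemma koszulVanishes_quotSMulTop {x : σ → R} {y : R} (hreg : IsSMulRegular M y) {i : ℕ}
    (h : KoszulVanishes x M i) (h' : KoszulVanishes x M (i + 1)) :
    KoszulVanishes x (QuotSMulTop y M) i := by
  refine (koszulVanishes_quotient_iff x _ i).2 fun f hf => ?_
  simp only [Submodule.mem_smul_pointwise_iff_exists, Submodule.mem_top, true_and] at hf ⊢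
  choose! g hg using hf
  obtain ⟨g₁, hg₁⟩ := h' g fun s hs => hreg <| calc
    y • koszulD x g s = koszulD x (y • g) s := by rw [map_smul, Pi.smul_apply]
    _ = koszulD x (koszulD x f) s := koszulD_congr x hg hs
    _ = y • 0 := by rw [koszulD_koszulD, Pi.zero_apply, smul_zero]
  obtain ⟨g₂, hg₂⟩ := h (f - y • g₁) fun s hs => by
    rw [map_sub, map_smul, Pi.sub_apply, Pi.smul_apply, ← hg₁ s hs, hg s hs, sub_self]
  exact ⟨g₂, fun s hs => ⟨g₁ s, by rw [← hg₂ s hs, Pi.sub_apply, sub_sub_cancel, Pi.smul_apply]⟩⟩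

lemma exists_isSMulRegular_of_koszulVanishes_zero [IsNoetherianRing R] [Module.Finite R M]
    {x : σ → R} (h : KoszulVanishes x M 0) : ∃ y ∈ Ideal.span (Set.range x), IsSMulRegular M y := by
  suffices Subsingleton ((R ⧸ Ideal.span (Set.range x)) →ₗ[R] M) by
    simpa only [Ideal.annihilator_quotient] using IsSMulRegular.subsingleton_linearMap_iff.1 this
  refine subsingleton_of_forall_eq 0 fun φ => Submodule.linearMap_qext _ (LinearMap.ext_ring ?_)
  have smul_eq_zero (v : σ) : x v • φ 1 = 0 := by
    rw [← map_smul, Algebra.smul_def, mul_one, Ideal.Quotient.algebraMap_eq,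
      Ideal.Quotient.eq_zero_iff_mem.2 (Ideal.subset_span (Set.mem_range_self v)), map_zero]
  obtain ⟨_, hg⟩ := h (fun _ => φ 1) fun s _ =>
    Finset.sum_eq_zero fun v _ => by rw [mul_smul, smul_eq_zero, smul_zero]
  exact hg ∅ rfl

lemma exists_isWeaklyRegular_iff_koszulVanishes [IsNoetherianRing R] [Module.Finite R M]
    (x : σ → R) (r : ℕ) :
    (∃ l : List R, l.length = r ∧ (∀ f ∈ l, f ∈ Ideal.span (Set.range x)) ∧ IsWeaklyRegular M l) ↔
      ∀ i < r, KoszulVanishes x M i := by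
  induction r generalizing M with
  | zero => exact ⟨fun _ i hi => absurd hi i.not_lt_zero, fun _ => ⟨[], rfl, by simp, .nil R M⟩⟩
  | succ r ih =>
    constructor
    · rintro ⟨_ | ⟨y, l⟩, hlen, hl, hreg⟩
      · simp at hlen
      obtain ⟨hy, hl⟩ := List.forall_mem_cons.1 hl
      obtain ⟨hyreg, hlreg⟩ := (isWeaklyRegular_cons_iff M y l).1 hreg
      have vanishes := ih.1 ⟨l, Nat.succ_injective hlen, hl, hlreg⟩
      rintro (_ | i) hi
      · exact koszulVanishes_zero_of_isSMulRegular hy hyreg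
      · exact koszulVanishes_succ_of_quotSMulTop hy hyreg (vanishes i (Nat.lt_of_succ_lt_succ hi))
    · intro h
      obtain ⟨y, hy, hyreg⟩ := exists_isSMulRegular_of_koszulVanishes_zero (h 0 r.succ_pos)
      obtain ⟨l, hlen, hl, hlreg⟩ := (ih (M := QuotSMulTop y M)).2 fun i hi =>
        koszulVanishes_quotSMulTop hyreg (h i (by lia)) (h (i + 1) (by lia))
      exact ⟨y :: l, congrArg _ hlen, List.forall_mem_cons.2 ⟨hy, hl⟩, hlreg.cons hyreg⟩

lemma exists_isRegular_iff_koszulVanishes [IsNoetherianRing R] [Module.Finite R M] {x : σ → R}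
    (hx : Ideal.span (Set.range x) • (⊤ : Submodule R M) ≠ ⊤) (r : ℕ) :
    (∃ l : List R, l.length = r ∧ (∀ f ∈ l, f ∈ Ideal.span (Set.range x)) ∧ IsRegular M l) ↔
      ∀ i < r, KoszulVanishes x M i := by
  rw [← exists_isWeaklyRegular_iff_koszulVanishes]
  refine exists_congr fun l => and_congr_right fun _ => and_congr_right fun hl => ?_
  have ofList_le : Ideal.ofList l ≤ Ideal.span (Set.range x) := Ideal.span_le.2 hl
  refine ⟨fun hreg => hreg.toIsWeaklyRegular, fun hreg => ⟨hreg, fun htop => hx ?_⟩⟩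
  exact top_unique (htop.le.trans (Submodule.smul_mono_left ofList_le))

lemma not_koszulVanishes_card [Fintype σ] {x : σ → R}
    (hx : Ideal.span (Set.range x) • (⊤ : Submodule R M) ≠ ⊤) :
    ¬ KoszulVanishes x M (Fintype.card σ) := by
  refine fun h => hx ((Submodule.eq_top_iff').2 fun m => ?_)
  obtain ⟨g, hg⟩ := h (fun _ => m) fun s hs => by have := s.card_le_univ; lia
  rw [show m = _ from hg Finset.univ Finset.card_univ]
  exact Submodule.sum_mem _ fun v _ => Submodule.smul_mem_smul
    (Ideal.mul_mem_left _ _ (Ideal.subset_span ⟨v, rfl⟩)) trivial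

lemma smul_top_quotient_ne_top {I J : Ideal R} (hIJ : I ≤ J) (hJ : J ≠ ⊤) :
    J • (⊤ : Submodule R (R ⧸ I)) ≠ ⊤ := by
  intro h
  have map_eq_top : Submodule.map I.mkQ J = ⊤ := by
    rw [← h, ← I.range_mkQ, ← Submodule.map_top, ← Submodule.map_smul'', smul_eq_mul,
      Ideal.mul_top]
  have := congrArg (Submodule.comap I.mkQ) map_eq_top
  rw [Submodule.comap_map_mkQ, sup_eq_right.2 hIJ, Submodule.comap_top] at this
  exact hJ this

lemma idealOfVars_ne_top (σ K : Type*) [CommRing K] [Nontrivial K] : idealOfVars σ K ≠ ⊤ := by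
  intro h
  have := (mem_pow_idealOfVars_iff 1 (1 : MvPolynomial σ K)).1 (by rw [pow_one, h]; trivial) 0
    (by simp)
  simp at this

theorem isLeast_qdepth {K : Type*} [Field K] [Finite σ] {I : Ideal (MvPolynomial σ K)}
    (hI : I ≤ idealOfVars σ K) :
    IsLeast {i | ¬ KoszulVanishes (X : σ → MvPolynomial σ K) (MvPolynomial σ K ⧸ I) i}
      (qdepth K I) := by
  classical
  cases nonempty_fintype σ
  have hx := smul_top_quotient_ne_top hI (idealOfVars_ne_top σ K)
  have nonvanishing : ∃ i, ¬ KoszulVanishes (X : σ → MvPolynomial σ K) (MvPolynomial σ K ⧸ I) i :=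
    ⟨_, not_koszulVanishes_card hx⟩
  suffices qdepth K I = Nat.find nonvanishing by
    rw [this]
    exact ⟨Nat.find_spec nonvanishing, fun i hi => Nat.find_min' nonvanishing hi⟩
  refine (congrArg sSup (Set.ext fun r => ?_)).trans (csSup_Iic (a := Nat.find nonvanishing))
  refine (exists_isRegular_iff_koszulVanishes hx r).trans ?_
  simp only [Set.mem_Iic, Nat.le_find_iff, not_not]

end KoszulDepth

section StanleyReisner

variable {σ K : Type*} [CommRing K]

/-- The exponent of the squarefree monomial `∏ v ∈ s, X v`. -/
noncomputable def sqfreeExponent (s : Finset σ) : σ →₀ ℕ :=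
  ∑ v ∈ s, Finsupp.single v 1

/-- The Stanley–Reisner ideal of `Δ`, generated by the squarefree monomials of the nonfaces. -/
noncomputable def stanleyReisnerIdeal (K : Type*) [CommRing K] (Δ : Set (Finset σ)) :
    Ideal (MvPolynomial σ K) :=
  Ideal.span {u | ∃ F ∉ Δ, u = ∏ v ∈ F, X v}

lemma prod_X_eq_monomial_sqfreeExponent (s : Finset σ) :
    ∏ v ∈ s, (X v : MvPolynomial σ K) = monomial (sqfreeExponent s) 1 :=
  (monomial_sum_one s _).symm

lemma sqfreeExponent_apply [DecidableEq σ] (s : Finset σ) (v : σ) :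
    sqfreeExponent s v = if v ∈ s then 1 else 0 := by
  simp [sqfreeExponent, Finsupp.finsetSum_apply, Finsupp.single_apply]

lemma support_sqfreeExponent (s : Finset σ) : (sqfreeExponent s).support = s := by
  classical
  ext v
  simp [sqfreeExponent_apply]

lemma sqfreeExponent_le_iff {s : Finset σ} {b : σ →₀ ℕ} :
    sqfreeExponent s ≤ b ↔ s ⊆ b.support := by
  classical
  refine forall_congr' fun v => ?_
  by_cases hv : v ∈ s <;> simp [sqfreeExponent_apply, hv, Nat.one_le_iff_ne_zero]

lemma mem_stanleyReisnerIdeal_iff {Δ : Set (Finset σ)} (hΔ : IsLowerSet Δ)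
    {p : MvPolynomial σ K} :
    p ∈ stanleyReisnerIdeal K Δ ↔ ∀ m ∈ p.support, m.support ∉ Δ := by
  have generators : {u : MvPolynomial σ K | ∃ F ∉ Δ, u = ∏ v ∈ F, X v} =
      (fun m => monomial m 1) '' (sqfreeExponent '' Δᶜ) := by
    ext u
    simp [prod_X_eq_monomial_sqfreeExponent, eq_comm]
  rw [stanleyReisnerIdeal, generators, mem_ideal_span_monomial_image]
  simp only [Set.exists_mem_image, sqfreeExponent_le_iff]
  exact forall₂_congr fun m _ => ⟨fun ⟨F, hF, hFm⟩ hm => hF (hΔ hFm hm), fun hm => ⟨_, hm, le_rfl⟩⟩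

lemma stanleyReisnerIdeal_le_idealOfVars {Δ : Set (Finset σ)} (h : ∅ ∈ Δ) :
    stanleyReisnerIdeal K Δ ≤ idealOfVars σ K := by
  refine Ideal.span_le.2 ?_
  rintro _ ⟨F, hF, rfl⟩
  obtain ⟨v, hv⟩ : F.Nonempty := Finset.nonempty_iff_ne_empty.2 fun hF' => hF (hF' ▸ h)
  exact Ideal.mem_of_dvd _ (Finset.dvd_prod_of_mem X hv) (Ideal.subset_span ⟨v, rfl⟩)

end StanleyReisner

section ReducedCohomology

open scoped Finset

variable {σ K : Type*} [LinearOrder σ] [CommRing K]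

/-- The reduced simplicial cohomology `H̃^{i-1}(Δ; K)` vanishes. The index `i` is the number of
vertices of the simplices in question. -/
def ReducedCohomologyVanishes (K : Type*) [CommRing K] (Δ : Set (Finset σ)) (i : ℕ) :
    Prop :=
  ∀ φ : Finset σ → K, (∀ s ∈ Δ, #s = i + 1 → koszulD (1 : σ → K) φ s = 0) →
    ∃ ψ : Finset σ → K, ∀ s ∈ Δ, #s = i → φ s = koszulD (1 : σ → K) ψ s

lemma reducedCohomologyVanishes_of_skeleton [Nonempty σ] {Δ : Set (Finset σ)} {i : ℕ}
    (hskel : ∀ s : Finset σ, #s = i + 1 → s ∈ Δ) : ReducedCohomologyVanishes K Δ i := by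
  intro φ hcocycle
  obtain ⟨v⟩ := ‹Nonempty σ›
  refine ⟨koszulContract K v φ, fun s _ hsi => ?_⟩
  rw [koszulD_koszulContract_eq_smul, Pi.one_apply, one_smul]
  intro hvs
  have card_insert : #(insert v s) = i + 1 := by rw [Finset.card_insert_of_notMem hvs, hsi]
  exact hcocycle _ (hskel _ card_insert) card_insert

end ReducedCohomology

section MultigradedStrands

open scoped Finset

variable {σ K : Type*} [LinearOrder σ] [Fintype σ] [CommRing K]

/-- The component of multidegree `b` of a Koszul cochain of `X` over the polynomial ring, the basis
vector of `s` having multidegree that of `∏ v ∈ sᶜ, X v`. Multiplication of the value at `s` by that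
monomial turns the Koszul differential of `X` into the one of the constant family `1`. -/
noncomputable def koszulCoeff (b : σ →₀ ℕ) :
    (Finset σ → MvPolynomial σ K) →ₗ[K] (Finset σ → K) :=
  LinearMap.pi fun s =>
    lcoeff K b ∘ₗ LinearMap.mulLeft K (monomial (sqfreeExponent sᶜ) 1) ∘ₗ LinearMap.proj s

/-- `φ` is the component of multidegree `b` of some Koszul cochain of `X`. -/
def IsStrandCochain (b : σ →₀ ℕ) (φ : Finset σ → K) : Prop :=
  ∀ s : Finset σ, ¬ sᶜ ⊆ b.support → φ s = 0

/-- The sets `s` at which the multidegree `b` strand of the Koszul complex of the Stanley–Reisner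
ring of `Δ` is nonzero. -/
def strandFaces (Δ : Set (Finset σ)) (b : σ →₀ ℕ) : Set (Finset σ) :=
  {s | sᶜ ⊆ b.support ∧ (b - sqfreeExponent sᶜ).support ∈ Δ}

/-- The multidegree `b` part of the `i`-th Koszul cohomology of the Stanley–Reisner ring of `Δ`
vanishes. -/
def StrandVanishes (K : Type*) [CommRing K] (Δ : Set (Finset σ)) (b : σ →₀ ℕ) (i : ℕ) : Prop :=
  ∀ φ : Finset σ → K, IsStrandCochain b φ →
    (∀ s ∈ strandFaces Δ b, #s = i + 1 → koszulD (1 : σ → K) φ s = 0) →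
    ∃ ψ : Finset σ → K, IsStrandCochain b ψ ∧
      ∀ s ∈ strandFaces Δ b, #s = i → φ s = koszulD (1 : σ → K) ψ s

lemma koszulCoeff_def (b : σ →₀ ℕ) (f : Finset σ → MvPolynomial σ K) (s : Finset σ) :
    koszulCoeff b f s = coeff b (monomial (sqfreeExponent sᶜ) 1 * f s) := rfl

lemma koszulCoeff_apply (b : σ →₀ ℕ) (f : Finset σ → MvPolynomial σ K) (s : Finset σ) :
    koszulCoeff b f s = if sᶜ ⊆ b.support then coeff (b - sqfreeExponent sᶜ) (f s) else 0 := by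
  simp only [koszulCoeff_def, coeff_monomial_mul', one_mul, sqfreeExponent_le_iff]

lemma isStrandCochain_koszulCoeff (b : σ →₀ ℕ) (f : Finset σ → MvPolynomial σ K) :
    IsStrandCochain b (koszulCoeff b f) := fun s hs => by
  rw [koszulCoeff_apply, if_neg hs]

lemma koszulCoeff_koszulD (b : σ →₀ ℕ) (f : Finset σ → MvPolynomial σ K) :
    koszulCoeff b (koszulD (X : σ → MvPolynomial σ K) f) =
      koszulD (1 : σ → K) (koszulCoeff b f) := by
  ext s
  simp only [koszulCoeff_def, koszulD_apply, Finset.mul_sum, coeff_sum]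
  refine Finset.sum_congr rfl fun v hv => ?_
  have monomial_erase : (monomial (sqfreeExponent (s.erase v)ᶜ) 1 : MvPolynomial σ K) =
      X v * monomial (sqfreeExponent sᶜ) 1 := by
    rw [← prod_X_eq_monomial_sqfreeExponent, ← prod_X_eq_monomial_sqfreeExponent,
      Finset.compl_erase, Finset.prod_insert (by simpa using hv)]
  rw [monomial_erase, ← map_faceSign C, Pi.one_apply, mul_one, smul_eq_mul, smul_eq_mul,
    ← coeff_C_mul]
  ring_nf

lemma finite_support_koszulCoeff (f : Finset σ → MvPolynomial σ K) :
    (Function.support fun b => koszulCoeff b f).Finite := by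
  refine (Set.finite_iUnion fun s : Finset σ =>
    (monomial (sqfreeExponent sᶜ) 1 * f s).support.finite_toSet).subset fun b hb => ?_
  obtain ⟨s, hs⟩ := Function.ne_iff.1 hb
  exact Set.mem_iUnion.2 ⟨s, mem_support_iff.2 hs⟩

lemma exists_koszulCoeff_eq {ψ : (σ →₀ ℕ) → Finset σ → K} (hψ : ∀ b, IsStrandCochain b (ψ b))
    (hfin : (Function.support ψ).Finite) :
    ∃ g : Finset σ → MvPolynomial σ K, ∀ b, koszulCoeff b g = ψ b := by
  refine ⟨fun s => ∑ b ∈ hfin.toFinset, monomial (b - sqfreeExponent sᶜ) (ψ b s), fun b => ?_⟩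
  ext s
  have shift (c : σ →₀ ℕ) : monomial (sqfreeExponent sᶜ) 1 *
      monomial (c - sqfreeExponent sᶜ) (ψ c s) = monomial c (ψ c s) := by
    by_cases hc : sᶜ ⊆ c.support
    · rw [monomial_mul, one_mul, add_tsub_cancel_of_le (sqfreeExponent_le_iff.2 hc)]
    · rw [hψ c s hc, map_zero, map_zero, mul_zero]
  simp only [koszulCoeff_def, Finset.mul_sum, shift, coeff_sum, coeff_monomial,
    Finset.sum_ite_eq', Set.Finite.mem_toFinset, Function.mem_support, ite_eq_left_iff, not_not]
  exact fun h => (congrFun h s).symm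

lemma mem_stanleyReisnerIdeal_iff_koszulCoeff {Δ : Set (Finset σ)} (hΔ : IsLowerSet Δ)
    (f : Finset σ → MvPolynomial σ K) (s : Finset σ) :
    f s ∈ stanleyReisnerIdeal K Δ ↔ ∀ b, s ∈ strandFaces Δ b → koszulCoeff b f s = 0 := by
  rw [mem_stanleyReisnerIdeal_iff hΔ]
  constructor
  · rintro h b ⟨hs, hb⟩
    rw [koszulCoeff_apply, if_pos hs]
    exact notMem_support_iff.1 fun hmem => h _ hmem hb
  · intro h m hm hmΔ
    refine mem_support_iff.1 hm ?_
    have mem_strand : s ∈ strandFaces Δ (sqfreeExponent sᶜ + m) :=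
      ⟨sqfreeExponent_le_iff.1 le_self_add, by rwa [add_tsub_cancel_left]⟩
    simpa only [koszulCoeff_def, coeff_monomial_mul, one_mul] using h _ mem_strand

lemma strandVanishes_of_koszulVanishes {Δ : Set (Finset σ)} (hΔ : IsLowerSet Δ) {i : ℕ}
    (h : KoszulVanishes (X : σ → MvPolynomial σ K)
      (MvPolynomial σ K ⧸ stanleyReisnerIdeal K Δ) i) (b : σ →₀ ℕ) : StrandVanishes K Δ b i := by
  classical
  intro φ hφ hcocycle
  obtain ⟨f, hf⟩ := exists_koszulCoeff_eq (ψ := Pi.single b φ)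
    (fun c => by obtain rfl | hc := eq_or_ne c b <;> simp_all [IsStrandCochain])
    ((Set.finite_singleton b).subset Pi.support_single_subset)
  have cocycle (s : Finset σ) (hs : #s = i + 1) :
      koszulD (X : σ → MvPolynomial σ K) f s ∈ stanleyReisnerIdeal K Δ := by
    refine (mem_stanleyReisnerIdeal_iff_koszulCoeff hΔ _ s).2 fun c hc => ?_
    rw [koszulCoeff_koszulD, hf]
    obtain rfl | hcb := eq_or_ne c b
    · rw [Pi.single_eq_same, hcocycle s hc hs]
    · rw [Pi.single_eq_of_ne hcb, map_zero, Pi.zero_apply]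
  obtain ⟨g, hg⟩ := (koszulVanishes_quotient_iff X _ i).1 h f cocycle
  refine ⟨koszulCoeff b g, isStrandCochain_koszulCoeff b g, fun s hs hsi => sub_eq_zero.1 ?_⟩
  have := (mem_stanleyReisnerIdeal_iff_koszulCoeff hΔ (f - koszulD X g) s).1 (hg s hsi) b hs
  rwa [map_sub, koszulCoeff_koszulD, hf, Pi.single_eq_same] at this

lemma koszulVanishes_of_forall_strandVanishes {Δ : Set (Finset σ)} (hΔ : IsLowerSet Δ) {i : ℕ}
    (h : ∀ b, StrandVanishes K Δ b i) :
    KoszulVanishes (X : σ → MvPolynomial σ K) (MvPolynomial σ K ⧸ stanleyReisnerIdeal K Δ) i := by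
  refine (koszulVanishes_quotient_iff X _ i).2 fun f hf => ?_
  have primitive (b : σ →₀ ℕ) : ∃ ψ : Finset σ → K, IsStrandCochain b ψ ∧
      (koszulCoeff b f = 0 → ψ = 0) ∧
      ∀ s ∈ strandFaces Δ b, #s = i → koszulCoeff b f s = koszulD (1 : σ → K) ψ s := by
    by_cases hb : koszulCoeff b f = 0
    · exact ⟨0, fun _ _ => rfl, fun _ => rfl, fun s _ _ => by rw [hb, map_zero]⟩
    obtain ⟨ψ, hψ, hψf⟩ := h b _ (isStrandCochain_koszulCoeff b f) fun s hs hsi => by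
      rw [← koszulCoeff_koszulD]
      exact (mem_stanleyReisnerIdeal_iff_koszulCoeff hΔ _ s).1 (hf s hsi) b hs
    exact ⟨ψ, hψ, fun hb' => absurd hb' hb, hψf⟩
  choose ψ hψ hψ_zero hψf using primitive
  obtain ⟨g, hg⟩ := exists_koszulCoeff_eq hψ
    ((finite_support_koszulCoeff f).subset fun b hb hb' => hb (hψ_zero b hb'))
  refine ⟨g, fun s hs => (mem_stanleyReisnerIdeal_iff_koszulCoeff hΔ (f - koszulD X g) s).2 ?_⟩
  intro b hb
  rw [map_sub, koszulCoeff_koszulD, hg, Pi.sub_apply, hψf b s hb hs, sub_self]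

lemma strandVanishes_of_insert_mem_strandFaces {Δ : Set (Finset σ)} {b : σ →₀ ℕ} {i : ℕ} {v : σ}
    (hv : v ∈ b.support)
    (h : ∀ s ∈ strandFaces Δ b, #s = i → v ∉ s → insert v s ∈ strandFaces Δ b) :
    StrandVanishes K Δ b i := by
  intro φ hφ hcocycle
  refine ⟨koszulContract K v φ, fun s hs => ?_, fun s hs hsi => ?_⟩
  · rw [koszulContract, hφ (insert v s), smul_zero, ite_self]
    rwa [Finset.compl_insert, ← Finset.subset_insert_iff, Finset.insert_eq_of_mem hv]
  · rw [koszulD_koszulContract_eq_smul, Pi.one_apply, one_smul]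
    intro hvs
    exact hcocycle _ (h s hs hsi hvs) (by rw [Finset.card_insert_of_notMem hvs, hsi])

lemma strandVanishes_of_one_lt (Δ : Set (Finset σ)) {b : σ →₀ ℕ} {v : σ} (hv : 1 < b v) (i : ℕ) :
    StrandVanishes K Δ b i := by
  have hv_support : v ∈ b.support := Finsupp.mem_support_iff.2 (Nat.ne_zero_of_lt hv)
  refine strandVanishes_of_insert_mem_strandFaces hv_support ?_
  rintro s ⟨hs, hsΔ⟩ - -
  refine ⟨(Finset.compl_subset_compl.2 (Finset.subset_insert v s)).trans hs, ?_⟩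
  convert hsΔ using 1
  ext w
  simp only [Finsupp.mem_support_iff, Finsupp.tsub_apply, sqfreeExponent_apply,
    Finset.mem_compl]
  grind

lemma strandVanishes_of_notMem_support {Δ : Set (Finset σ)} {b : σ →₀ ℕ} {u v : σ} {i : ℕ}
    (hskel : ∀ s : Finset σ, #s ≤ i → s ∈ Δ) (hb : ∀ w, b w ≤ 1) (hu : u ∉ b.support)
    (hv : v ∈ b.support) : StrandVanishes K Δ b i := by
  refine strandVanishes_of_insert_mem_strandFaces hv ?_
  rintro s ⟨hs, -⟩ hsi hvs
  refine ⟨(Finset.compl_subset_compl.2 (Finset.subset_insert v s)).trans hs, hskel _ ?_⟩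
  have hus : u ∈ insert v s := Finset.mem_insert_of_mem <| by
    by_contra hus
    exact hu (hs (Finset.mem_compl.2 hus))
  have support_subset : (b - sqfreeExponent (insert v s)ᶜ).support ⊆ (insert v s).erase u := by
    intro w hw
    have := hb w
    simp only [Finsupp.mem_support_iff, Finsupp.tsub_apply, sqfreeExponent_apply,
      Finset.mem_compl] at hw hu
    grind
  calc #(b - sqfreeExponent (insert v s)ᶜ).support
    _ ≤ #((insert v s).erase u) := Finset.card_le_card support_subset
    _ = i := by rw [Finset.card_erase_of_mem hus, Finset.card_insert_of_notMem hvs, hsi]; rfl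

lemma strandVanishes_zero (Δ : Set (Finset σ)) {i : ℕ} (hi : i < Fintype.card σ) :
    StrandVanishes K Δ 0 i := by
  refine fun φ _ _ => ⟨0, fun _ _ => rfl, fun s ⟨hs, _⟩ hsi => ?_⟩
  rw [Finsupp.support_zero, Finset.subset_empty, Finset.compl_eq_empty_iff] at hs
  rw [hs, Finset.card_univ] at hsi
  exact absurd hsi hi.ne'

lemma strandVanishes_of_ne_sqfreeExponent_univ {Δ : Set (Finset σ)} {b : σ →₀ ℕ} {i : ℕ}
    (hi : i < Fintype.card σ) (hskel : ∀ s : Finset σ, #s ≤ i → s ∈ Δ)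
    (hb : b ≠ sqfreeExponent Finset.univ) : StrandVanishes K Δ b i := by
  by_cases hlarge : ∃ v, 1 < b v
  · obtain ⟨v, hv⟩ := hlarge
    exact strandVanishes_of_one_lt Δ hv i
  push Not at hlarge
  obtain rfl | hb0 := eq_or_ne b 0
  · exact strandVanishes_zero Δ hi
  obtain ⟨v, hv⟩ := Finsupp.support_nonempty_iff.2 hb0
  obtain ⟨u, hu⟩ : ∃ u, u ∉ b.support := by
    by_contra! hfull
    refine hb (Finsupp.ext fun w => ?_)
    rw [sqfreeExponent_apply, if_pos (Finset.mem_univ w)]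
    exact (hlarge w).antisymm (Nat.one_le_iff_ne_zero.2 (Finsupp.mem_support_iff.1 (hfull w)))
  exact strandVanishes_of_notMem_support hskel hlarge hu hv

lemma strandVanishes_sqfreeExponent_univ_iff (Δ : Set (Finset σ)) (i : ℕ) :
    StrandVanishes K Δ (sqfreeExponent Finset.univ) i ↔ ReducedCohomologyVanishes K Δ i := by
  have isStrandCochain (φ : Finset σ → K) : IsStrandCochain (sqfreeExponent Finset.univ) φ :=
    fun s hs => absurd (by simp [support_sqfreeExponent]) hs
  have strandFaces_eq : strandFaces Δ (sqfreeExponent Finset.univ) = Δ := by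
    ext s
    have : sqfreeExponent Finset.univ - sqfreeExponent sᶜ = sqfreeExponent s := by
      ext v
      by_cases hv : v ∈ s <;> simp [sqfreeExponent_apply, hv]
    simp [strandFaces, this, support_sqfreeExponent]
  simp only [StrandVanishes, strandFaces_eq, isStrandCochain, true_and, true_imp_iff,
    ReducedCohomologyVanishes]

theorem koszulVanishes_stanleyReisner_iff {Δ : Set (Finset σ)} {i : ℕ} (hΔ : IsLowerSet Δ)
    (hi : i < Fintype.card σ) (hskel : ∀ s : Finset σ, #s ≤ i → s ∈ Δ) :
    KoszulVanishes (X : σ → MvPolynomial σ K) (MvPolynomial σ K ⧸ stanleyReisnerIdeal K Δ) i ↔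
      ReducedCohomologyVanishes K Δ i := by
  rw [← strandVanishes_sqfreeExponent_univ_iff]
  refine ⟨fun h => strandVanishes_of_koszulVanishes hΔ h _,
    fun h => koszulVanishes_of_forall_strandVanishes hΔ fun b => ?_⟩
  obtain rfl | hb := eq_or_ne b (sqfreeExponent Finset.univ)
  · exact h
  · exact strandVanishes_of_ne_sqfreeExponent_univ hi hskel hb

end MultigradedStrands

section LinearFunctionals

lemma exists_eq_linearCombination {R M ι : Type*} [Semiring R] [AddCommMonoid M] [Module R M]
    (ℓ : (ι →₀ R) →ₗ[R] M) : ∃ φ : ι → M, ℓ = Finsupp.linearCombination R φ :=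
  ⟨fun s => ℓ (Finsupp.single s 1), by ext; simp⟩

lemma linearCombination_congr_of_mem_supported {R M ι : Type*} [Semiring R] [AddCommMonoid M]
    [Module R M] {φ ψ : ι → M} {t : Set ι} (h : Set.EqOn φ ψ t) {c : ι →₀ R}
    (hc : c ∈ Finsupp.supported R R t) :
    Finsupp.linearCombination R φ c = Finsupp.linearCombination R ψ c :=
  Finsupp.sum_congr fun s hs => congrArg (c s • ·) (h (hc hs))

lemma exists_forall_mem_comp_eq {K V W : Type*} [Field K] [AddCommGroup V] [Module K V]
    [AddCommGroup W] [Module K W] {p : Submodule K V} {f : V →ₗ[K] W} {φ : V →ₗ[K] K}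
    (h : ∀ c ∈ p, f c = 0 → φ c = 0) : ∃ ℓ : W →ₗ[K] K, ∀ c ∈ p, ℓ (f c) = φ c := by
  have : φ.domRestrict p ∈ (f.domRestrict p).dualMap.range := by
    rw [LinearMap.range_dualMap_eq_dualAnnihilator_ker, Submodule.mem_dualAnnihilator]
    exact fun c hc => h c c.2 hc
  obtain ⟨ℓ, hℓ⟩ := this
  exact ⟨ℓ, fun c hc => LinearMap.congr_fun hℓ ⟨c, hc⟩⟩

end LinearFunctionals

section Duality

open scoped Finset

variable {σ K : Type*} [LinearOrder σ] [Fintype σ] [Field K]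

lemma linearCombination_bnd (φ : Finset σ → K) (c : Finset σ →₀ K) :
    Finsupp.linearCombination K φ (bnd K c) =
      Finsupp.linearCombination K (koszulD (1 : σ → K) φ) c := by
  refine LinearMap.congr_fun (f := Finsupp.linearCombination K φ ∘ₗ bnd K) ?_ c
  ext s
  simp [bnd, koszulD_apply, faceSign]

lemma not_homNonzero_iff (Δ : Set (Finset σ)) (j : ℕ) :
    ¬ homNonzero K Δ j ↔ ∀ c ∈ Finsupp.supported K K {s | s ∈ Δ ∧ #s = j + 1}, bnd K c = 0 →
      c ∈ (Finsupp.supported K K {s | s ∈ Δ ∧ #s = j + 2}).map (bnd K) := by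
  simp only [homNonzero, Submodule.mem_map, Finsupp.mem_supported, Set.subset_def, Finset.mem_coe]
  push Not
  rfl

lemma not_homNonzero_of_reducedCohomologyVanishes {Δ : Set (Finset σ)} {j : ℕ}
    (h : ReducedCohomologyVanishes K Δ (j + 1)) : ¬ homNonzero K Δ j := by
  rw [not_homNonzero_iff]
  intro c hc hbnd
  by_contra hcon
  obtain ⟨ℓ, hℓc, hℓ⟩ := Submodule.exists_le_ker_of_notMem hcon
  obtain ⟨φ, rfl⟩ := exists_eq_linearCombination ℓ
  obtain ⟨ψ, hψ⟩ := h φ fun s hs hsj => by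
    have := hℓ (Submodule.mem_map_of_mem (Finsupp.single_mem_supported K 1 ⟨hs, hsj⟩))
    simpa [linearCombination_bnd] using this
  apply hℓc
  calc Finsupp.linearCombination K φ c
    _ = Finsupp.linearCombination K (koszulD (1 : σ → K) ψ) c :=
        linearCombination_congr_of_mem_supported (fun s hs => hψ s hs.1 hs.2) hc
    _ = 0 := by rw [← linearCombination_bnd, hbnd, map_zero]

lemma reducedCohomologyVanishes_of_not_homNonzero {Δ : Set (Finset σ)} {j : ℕ}
    (h : ¬ homNonzero K Δ j) : ReducedCohomologyVanishes K Δ (j + 1) := by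
  rw [not_homNonzero_iff] at h
  intro φ hcocycle
  have coboundary_eq_zero : Set.EqOn (koszulD (1 : σ → K) φ) 0 {s | s ∈ Δ ∧ #s = j + 2} :=
    fun s hs => hcocycle s hs.1 hs.2
  obtain ⟨ℓ, hℓ⟩ := exists_forall_mem_comp_eq (f := bnd K) (φ := Finsupp.linearCombination K φ)
    (p := Finsupp.supported K K {s | s ∈ Δ ∧ #s = j + 1}) fun c hc hbnd => by
      obtain ⟨b, hb, rfl⟩ := h c hc hbnd
      rw [linearCombination_bnd, linearCombination_congr_of_mem_supported coboundary_eq_zero hb,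
        Finsupp.linearCombination_zero, LinearMap.zero_apply]
  obtain ⟨ψ, rfl⟩ := exists_eq_linearCombination ℓ
  refine ⟨ψ, fun s hs hsj => ?_⟩
  have := hℓ _ (Finsupp.single_mem_supported K 1 ⟨hs, hsj⟩)
  simpa [linearCombination_bnd] using this.symm

theorem reducedCohomologyVanishes_succ_iff (Δ : Set (Finset σ)) (j : ℕ) :
    ReducedCohomologyVanishes K Δ (j + 1) ↔ ¬ homNonzero K Δ j :=
  ⟨not_homNonzero_of_reducedCohomologyVanishes, reducedCohomologyVanishes_of_not_homNonzero⟩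

end Duality

section StanleyReisnerDepth

open scoped Finset

variable {σ K : Type*} [LinearOrder σ] [Fintype σ] [Field K]

theorem qdepth_stanleyReisnerIdeal_eq_iff {Δ : Set (Finset σ)} {d : ℕ} (hΔ : IsLowerSet Δ)
    (hcard : d + 2 ≤ Fintype.card σ) (hskel : ∀ s : Finset σ, #s ≤ d + 1 → s ∈ Δ) :
    qdepth K (stanleyReisnerIdeal K Δ) = d + 1 ↔ homNonzero K Δ d := by
  have : Nonempty σ := Fintype.card_pos_iff.1 (by lia)
  have least := isLeast_qdepth (stanleyReisnerIdeal_le_idealOfVars (K := K) (hskel ∅ (by simp)))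
  have nonvanishing_iff : (d + 1) ∈ {i | ¬ KoszulVanishes (X : σ → MvPolynomial σ K)
      (MvPolynomial σ K ⧸ stanleyReisnerIdeal K Δ) i} ↔ homNonzero K Δ d := by
    rw [Set.mem_ofPred_eq, koszulVanishes_stanleyReisner_iff hΔ (by lia) hskel,
      reducedCohomologyVanishes_succ_iff, not_not]
  rw [← nonvanishing_iff]
  refine ⟨fun h => h ▸ least.1, fun h => least.unique ⟨h, fun i hi => ?_⟩⟩
  by_contra! hid
  refine hi ((koszulVanishes_stanleyReisner_iff hΔ (by lia) fun s hs => hskel s (by lia)).2 ?_)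
  exact reducedCohomologyVanishes_of_skeleton fun s hs => hskel s (by lia)

end StanleyReisnerDepth

section Matchings

open scoped Finset

variable {σ : Type*} [Fintype σ] [DecidableEq σ] {G : SimpleGraph σ}

lemma card_mVerts {M : Finset (Sym2 σ)} {k : ℕ} (hM : IsKMatching G M k) : #(mVerts M) = 2 * k := by
  obtain ⟨⟨edges, disjoint⟩, rfl⟩ := hM
  have mVerts_eq : mVerts M = M.biUnion Sym2.toFinset := by
    ext v
    simp [mVerts]
  rw [mVerts_eq, Finset.card_biUnion, Finset.sum_const_nat, mul_comm]
  · exact fun e he => Sym2.card_toFinset_of_not_isDiag e (G.not_isDiag_of_mem_edgeSet (edges he))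
  · intro e he f hf hef
    simpa only [Finset.disjoint_left, Sym2.mem_toFinset] using disjoint he hf hef

lemma isLowerSet_matchingComplex (G : SimpleGraph σ) (k : ℕ) :
    IsLowerSet (matchingComplex G k) :=
  fun _ _ hsub hF ⟨M, hM, hMF⟩ => hF ⟨M, hM, hMF.trans hsub⟩

lemma mem_matchingComplex_of_card_lt (G : SimpleGraph σ) {k : ℕ} {s : Finset σ}
    (hs : #s < 2 * k) : s ∈ matchingComplex G k := fun ⟨_, hM, hMs⟩ =>
  hs.not_ge (card_mVerts hM ▸ Finset.card_le_card hMs)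

lemma matchPow_eq_stanleyReisnerIdeal (K : Type*) [Field K] (G : SimpleGraph σ) (k : ℕ) :
    matchPow K G k = stanleyReisnerIdeal K (matchingComplex G k) := by
  refine le_antisymm (Ideal.span_mono ?_) (Ideal.span_le.2 ?_)
  · rintro _ ⟨M, hM, rfl⟩
    exact ⟨mVerts M, fun h => h ⟨M, hM, subset_rfl⟩, rfl⟩
  · rintro _ ⟨F, hF, rfl⟩
    obtain ⟨M, hM, hMF⟩ := not_not.1 hF
    exact Ideal.mem_of_dvd _ (Finset.prod_dvd_prod_of_subset _ _ X hMF)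
      (Ideal.subset_span ⟨M, hM, rfl⟩)

lemma two_mul_matchNum_le_card {σ : Type*} [Fintype σ] (G : SimpleGraph σ) :
    2 * matchNum G ≤ Fintype.card σ := by
  classical
  have bound : ∀ k ∈ {k | ∃ M, IsKMatching G M k}, 2 * k ≤ Fintype.card σ := by
    rintro k ⟨M, hM⟩
    exact card_mVerts hM ▸ Finset.card_le_univ _
  refine bound _ (Nat.sSup_mem ⟨0, ∅, by simp [IsKMatching, IsMatching]⟩ ⟨Fintype.card σ, ?_⟩)
  exact fun k hk => (Nat.le_mul_of_pos_left k two_pos).trans (bound k hk)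

end Matchings

theorem min_depth_iff_homology_nonzero_general {K : Type*} [Field K] {σ : Type*} [Fintype σ]
    [LinearOrder σ] (G : SimpleGraph σ) {k : ℕ} (hk1 : 1 ≤ k) (hk : 2 * k ≤ Fintype.card σ) :
    qdepth K (matchPow K G k) = 2 * k - 1 ↔
      homNonzero K (matchingComplex G k) (2 * k - 2) := by
  rw [matchPow_eq_stanleyReisnerIdeal, show 2 * k - 1 = 2 * k - 2 + 1 by lia]
  exact qdepth_stanleyReisnerIdeal_eq_iff (isLowerSet_matchingComplex G k) (by lia)
    fun s hs => mem_matchingComplex_of_card_lt G (by lia)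

/-- For a graph `G` on `[n]` and `1 ≤ k ≤ ν(G)`:
`g_{I(G)}(k) = 0`, i.e. `depth(S/I(G)^{[k]}) = 2k − 1`, if and only if
`H̃_{2k−2}(Γ_k(G); K) ≠ 0`. -/
theorem min_depth_iff_homology_nonzero {K : Type*} [Field K] {n : ℕ}
    (G : SimpleGraph (Fin n)) (k : ℕ) (hk1 : 1 ≤ k) (hk : k ≤ matchNum G) :
    qdepth K (matchPow K G k) = 2 * k - 1 ↔
      homNonzero K (matchingComplex G k) (2 * k - 2) :=
  min_depth_iff_homology_nonzero_general G hk1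
    ((Nat.mul_le_mul_left 2 hk).trans (two_mul_matchNum_le_card G))
end

section
/- Let G be a finite simple graph on [n] with no isolated vertices and ν(G) ≥ 2 which is not complete bipartite, and suppose the complement G^c is disconnected. For 2 ≤ k ≤ ν(G), let Δ be the simplicial complex whose facets are the vertex sets V(M) of the k-matchings M of G (the facet complex of I(G)^{[k]}). Then Δ admits a well-ordered facet cover of cardinality n − 2k + 1. -/
open MvPolynomial

/-- The facets of the facet complex of `I(G)^{[k]}`: the vertex sets of the
`k`-matchings of `G`. -/
def mFacets {σ : Type*} [Fintype σ] [DecidableEq σ]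
    (G : SimpleGraph σ) (k : ℕ) : Set (Finset σ) :=
  {F | ∃ M : Finset (Sym2 σ), IsKMatching G M k ∧ F = mVerts M}

/-!
A disconnected complement splits the vertices of `G` into two nonempty sides with every cross pair
adjacent, and since `G` is not complete bipartite some edge `yz` lies within one side. Starting from
a `k`-matching one can choose `yz`, a vertex `x` on the other side and a `(k - 2)`-matching `N`
missing `x`, `y` and `z`. Put `C = V(N) ∪ {x, y, z}`. Any further vertex `v` is matched to `y` (next
to the edge `xz`) if it lies on the side of `x`, and to `x` (next to the edge `yz`) otherwise, so
`C ∪ {v}` is always a facet. These `n - 2k + 1` facets, in any order, form a well-ordered cover: a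
facet `H` outside the list contains a vertex `v ∉ C` whose facet is not the last one, and
`C ∪ {v}` is contained in the union of `H` with the next facet of the list.
-/

section WellOrderedFacetCover

variable {V : Type*}

/-- The list `L` is a well-ordered facet cover of the simplicial complex with set of facets `𝓕`.
Indices start at `0`, so the condition `i ≤ m - 1` on a sequence `F_1, …, F_m` becomes
`i + 2 ≤ L.length`. -/
structure IsWellOrderedFacetCover (𝓕 : Set (Finset V)) (L : List (Finset V)) : Prop where
  nodup : L.Nodup
  mem_facets : ∀ F ∈ L, F ∈ 𝓕
  covers : ∀ v, (∃ H ∈ 𝓕, v ∈ H) → ∃ F ∈ L, v ∈ F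
  minimal : ∀ F ∈ L, ¬ ∀ v, (∃ H ∈ 𝓕, v ∈ H) → ∃ F' ∈ L, F' ≠ F ∧ v ∈ F'
  well_ordered : ∀ H ∈ 𝓕, H ∉ L → ∃ i : Fin L.length, (i : ℕ) + 2 ≤ L.length ∧
    ∀ x ∈ L.get i, x ∈ H ∨ ∃ F ∈ L.drop ((i : ℕ) + 1), x ∈ F

variable [DecidableEq V] {𝓕 : Set (Finset V)} {C H : Finset V} {l : List V}

lemma exists_getElem_mem_of_notMem_map_insert (h𝓕 : IsAntichain (· ⊆ ·) 𝓕)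
    (hmem : ∀ v, v ∈ l ↔ v ∉ C) (hl : l ≠ []) (hC : ∀ v ∉ C, insert v C ∈ 𝓕)
    (hH : H ∈ 𝓕) (hHl : H ∉ l.map (insert · C)) :
    ∃ (i : ℕ) (hi : i + 1 < l.length), l[i] ∈ H := by
  set w := l.getLast hl with hw
  have hwl : w ∈ l := l.getLast_mem hl
  have hHw : ¬ H ⊆ insert w C := fun hsub ↦
    hHl (List.mem_map.2 ⟨w, hwl, (h𝓕.eq hH (hC w ((hmem w).1 hwl)) hsub).symm⟩)
  obtain ⟨v, hvH, hv⟩ := Finset.not_subset.1 hHw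
  rw [Finset.mem_insert, not_or] at hv
  obtain ⟨i, hi, rfl⟩ := List.getElem_of_mem ((hmem v).2 hv.2)
  have hne : i ≠ l.length - 1 := by
    rintro rfl
    exact hv.1 (by rw [hw, List.getLast_eq_getElem])
  exact ⟨i, by omega, hvH⟩

theorem isWellOrderedFacetCover_map_insert (h𝓕 : IsAntichain (· ⊆ ·) 𝓕) (hnodup : l.Nodup)
    (hmem : ∀ v, v ∈ l ↔ v ∉ C) (hl : l ≠ []) (hC : ∀ v ∉ C, insert v C ∈ 𝓕) :
    IsWellOrderedFacetCover 𝓕 (l.map (insert · C)) where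
  nodup := hnodup.map_on fun v hv _ _ h ↦ (Finset.insert_inj ((hmem v).1 hv)).1 h
  mem_facets := List.forall_mem_map.2 fun v hv ↦ hC v ((hmem v).1 hv)
  covers v _ := by
    by_cases hv : v ∈ C
    · obtain ⟨w, hw⟩ := List.exists_mem_of_ne_nil l hl
      exact ⟨_, List.mem_map_of_mem hw, Finset.mem_insert_of_mem hv⟩
    · exact ⟨_, List.mem_map_of_mem ((hmem v).2 hv), Finset.mem_insert_self v C⟩
  minimal := List.forall_mem_map.2 fun v hv hcover ↦ by
    have hvC : v ∉ C := (hmem v).1 hv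
    obtain ⟨F', hF', hne, hvF'⟩ := hcover v ⟨_, hC v hvC, Finset.mem_insert_self v C⟩
    obtain ⟨w, -, rfl⟩ := List.mem_map.1 hF'
    obtain rfl : v = w := (Finset.mem_insert.1 hvF').resolve_right hvC
    exact hne rfl
  well_ordered H hH hHl := by
    obtain ⟨i, hi, hiH⟩ := exists_getElem_mem_of_notMem_map_insert h𝓕 hmem hl hC hH hHl
    have hlength : i + 1 < (l.map (insert · C)).length := by rwa [List.length_map]
    refine ⟨⟨i, by omega⟩, hlength, fun x hx ↦ ?_⟩
    simp only [List.get_eq_getElem, List.getElem_map, Finset.mem_insert] at hx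
    rcases hx with rfl | hxC
    · exact Or.inl hiH
    · refine Or.inr ⟨insert l[i + 1] C, ?_, Finset.mem_insert_of_mem hxC⟩
      exact List.mem_drop_iff_getElem.2 ⟨0, by simpa using hi, by simp⟩

theorem exists_isWellOrderedFacetCover_of_forall_insert_mem [Fintype V]
    (h𝓕 : IsAntichain (· ⊆ ·) 𝓕) (hne : Cᶜ.Nonempty) (hC : ∀ v ∉ C, insert v C ∈ 𝓕) :
    ∃ L : List (Finset V), L.length = Cᶜ.card ∧ IsWellOrderedFacetCover 𝓕 L :=
  ⟨Cᶜ.toList.map (insert · C), by simp,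
    isWellOrderedFacetCover_map_insert h𝓕 (Finset.nodup_toList _) (by simp)
      (by simpa using hne.ne_empty) hC⟩

end WellOrderedFacetCover

section Matching

variable {V : Type*} {G : SimpleGraph V} {M N : Finset (Sym2 V)} {e f : Sym2 V}
  {a b v : V} {k : ℕ}

lemma IsMatching.mono (hM : IsMatching G M) (hNM : N ⊆ M) : IsMatching G N :=
  ⟨fun _ he ↦ hM.1 (hNM he), hM.2.mono (Finset.coe_subset.2 hNM)⟩

lemma IsMatching.eq_of_mem (hM : IsMatching G M) (he : e ∈ M) (hf : f ∈ M) (hve : v ∈ e)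
    (hvf : v ∈ f) : e = f := by
  by_contra hef
  exact hM.2 he hf hef v hve hvf

lemma exists_isKMatching_of_le_matchNum [Finite V] (hk : k ≤ matchNum G) :
    ∃ M, IsKMatching G M k := by
  have hne : {j | ∃ M, IsKMatching G M j}.Nonempty :=
    ⟨0, ∅, by simp [IsKMatching, IsMatching]⟩
  have hbdd : BddAbove {j | ∃ M, IsKMatching G M j} := by
    refine ((Set.finite_range (Finset.card : Finset (Sym2 V) → ℕ)).subset ?_).bddAbove
    rintro _ ⟨M, -, rfl⟩
    exact Set.mem_range_self M
  obtain ⟨M, hM, hcard⟩ := Nat.sSup_mem hne hbdd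
  obtain ⟨N, hN, hNcard⟩ := Finset.exists_subset_card_eq (hk.trans hcard.ge)
  exact ⟨N, hM.mono hN, hNcard⟩

variable [Fintype V] [DecidableEq V]

lemma mem_mVerts : v ∈ mVerts M ↔ ∃ e ∈ M, v ∈ e := by
  simp [mVerts]

lemma mVerts_insert : mVerts (insert s(a, b) M) = insert a (insert b (mVerts M)) := by
  ext v
  simp [mem_mVerts, or_assoc]

lemma IsMatching.card_mVerts (hM : IsMatching G M) : (mVerts M).card = 2 * M.card := by
  have hunion : mVerts M = M.biUnion Sym2.toFinset := by
    ext v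
    simp [mem_mVerts]
  have hdisjoint : (M : Set (Sym2 V)).PairwiseDisjoint Sym2.toFinset := fun e he f hf hef ↦
    Finset.disjoint_left.2 fun v hve hvf ↦
      hM.2 he hf hef v (Sym2.mem_toFinset.1 hve) (Sym2.mem_toFinset.1 hvf)
  have hcard : ∀ e ∈ M, e.toFinset.card = 2 := fun e he ↦
    Sym2.card_toFinset_of_not_isDiag e (G.not_isDiag_of_mem_edgeSet (hM.1 he))
  rw [hunion, Finset.card_biUnion hdisjoint, Finset.sum_const_nat hcard, mul_comm]

lemma IsKMatching.insert (hM : IsKMatching G M k) (hab : G.Adj a b) (ha : a ∉ mVerts M)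
    (hb : b ∉ mVerts M) : IsKMatching G (insert s(a, b) M) (k + 1) := by
  obtain ⟨⟨hedges, hdisjoint⟩, hcard⟩ := hM
  have havoid : ∀ e ∈ M, ∀ v ∈ s(a, b), v ∉ e := by
    simp only [mem_mVerts, not_exists, not_and] at ha hb
    simpa [Sym2.mem_iff] using fun e he ↦ ⟨ha e he, hb e he⟩
  refine ⟨⟨?_, ?_⟩, ?_⟩
  · rw [Finset.coe_insert]
    exact Set.insert_subset hab hedges
  · rw [Finset.coe_insert]
    exact hdisjoint.insert fun e he _ ↦
      ⟨havoid e he, fun v hve hv ↦ havoid e he v hv hve⟩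
  · rw [Finset.card_insert_of_notMem, hcard]
    exact fun hmem ↦ havoid _ hmem a (Sym2.mem_mk_left a b) (Sym2.mem_mk_left a b)

lemma IsKMatching.exists_subset_notMem_mVerts (hM : IsKMatching G M (k + 1)) (v : V) :
    ∃ N ⊆ M, IsKMatching G N k ∧ v ∉ mVerts N := by
  have hcard_at_v : (M.filter (v ∈ ·)).card ≤ 1 := by
    refine Finset.card_le_one.2 fun e he f hf ↦ ?_
    rw [Finset.mem_filter] at he hf
    exact hM.1.eq_of_mem he.1 hf.1 he.2 hf.2
  have hcard : k ≤ (M.filter (v ∉ ·)).card := by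
    have hsum := Finset.card_filter_add_card_filter_not (s := M) (v ∈ ·)
    have hMcard := hM.2
    omega
  obtain ⟨N, hN, hNcard⟩ := Finset.exists_subset_card_eq hcard
  have hNM : N ⊆ M := hN.trans (Finset.filter_subset _ M)
  refine ⟨N, hNM, ⟨hM.1.mono hNM, hNcard⟩, fun hv ↦ ?_⟩
  obtain ⟨e, heN, hve⟩ := mem_mVerts.1 hv
  exact (Finset.mem_filter.1 (hN heN)).2 hve

lemma sized_mFacets (G : SimpleGraph V) (k : ℕ) : (mFacets G k).Sized (2 * k) := by
  rintro _ ⟨M, ⟨hM, rfl⟩, rfl⟩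
  exact hM.card_mVerts

lemma insert_insert_mem_mFacets {F : Finset V} (hF : F ∈ mFacets G k) (hab : G.Adj a b)
    (ha : a ∉ F) (hb : b ∉ F) : insert a (insert b F) ∈ mFacets G (k + 1) := by
  obtain ⟨M, hM, rfl⟩ := hF
  exact ⟨_, hM.insert hab ha hb, mVerts_insert.symm⟩

-- Deleting the edges at `b` and at `c` also uncovers `a`.
lemma IsKMatching.exists_mem_mFacets_avoiding (hM : IsKMatching G M (k + 2))
    (hab : ∀ e ∈ M, a ∈ e → b ∈ e) (c : V) : ∃ F ∈ mFacets G k, a ∉ F ∧ b ∉ F ∧ c ∉ F := by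
  obtain ⟨M', hM'M, hM', hb⟩ := hM.exists_subset_notMem_mVerts b
  obtain ⟨N, hNM', hN, hc⟩ := hM'.exists_subset_notMem_mVerts c
  have hbM' : ∀ e ∈ M', b ∉ e := fun e he hbe ↦ hb (mem_mVerts.2 ⟨e, he, hbe⟩)
  refine ⟨mVerts N, ⟨N, hN, rfl⟩, fun ha ↦ ?_, fun hbN ↦ ?_, hc⟩
  · obtain ⟨e, he, hae⟩ := mem_mVerts.1 ha
    exact hbM' e (hNM' he) (hab e (hM'M (hNM' he)) hae)
  · obtain ⟨e, he, hbe⟩ := mem_mVerts.1 hbN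
    exact hbM' e (hNM' he) hbe

end Matching

section TwoSides

variable {V ι : Type*} {G : SimpleGraph V} {k : ℕ} {side : V → ι}

lemma exists_sides_of_not_connected_compl [Nonempty V] (hdisc : ¬ Gᶜ.Connected)
    (hnotbip : ¬ ∃ A : Set V, ∀ x y, G.Adj x y ↔ ((x ∈ A ∧ y ∉ A) ∨ (x ∉ A ∧ y ∈ A))) :
    ∃ side : V → Prop, (∀ a b, side a ≠ side b → G.Adj a b) ∧ (∀ y, ∃ x, side x ≠ side y) ∧
      ∃ y z, G.Adj y z ∧ side y = side z := by
  obtain ⟨u, w, huw⟩ : ∃ u w, ¬ Gᶜ.Reachable u w := by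
    by_contra! hreach
    exact hdisc ⟨hreach⟩
  have hcross : ∀ a b, Gᶜ.Reachable u a ≠ Gᶜ.Reachable u b → G.Adj a b := fun a b hne ↦ by
    refine compl_compl G ▸ (Gᶜ.reachable_or_compl_adj a b).resolve_left fun hab ↦ hne ?_
    exact propext ⟨fun h ↦ h.trans hab, fun h ↦ h.trans hab.symm⟩
  refine ⟨Gᶜ.Reachable u, hcross, fun y ↦ ?_, ?_⟩
  · by_contra! hconst
    exact huw ((hconst w).trans (hconst u).symm ▸ SimpleGraph.Reachable.refl u)
  · by_contra! hbip
    refine hnotbip ⟨{a | Gᶜ.Reachable u a}, fun x y ↦ ?_⟩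
    have hadj : G.Adj x y ↔ Gᶜ.Reachable u x ≠ Gᶜ.Reachable u y := ⟨hbip x y, hcross x y⟩
    rw [hadj, Ne, eq_iff_iff]
    simp only [Set.mem_ofPred_eq]
    tauto

variable [Fintype V] [DecidableEq V]

lemma exists_triangle_disjoint_mem_mFacets {M : Finset (Sym2 V)} (hM : IsKMatching G M (k + 2))
    (hopp : ∀ y, ∃ x, side x ≠ side y) (hedge : ∃ y z, G.Adj y z ∧ side y = side z) :
    ∃ x y z, G.Adj y z ∧ side y = side z ∧ side x ≠ side y ∧
      ∃ F ∈ mFacets G k, x ∉ F ∧ y ∉ F ∧ z ∉ F := by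
  by_cases hcompat : ∃ y z, G.Adj y z ∧ side y = side z ∧ ∀ e ∈ M, y ∈ e → z ∈ e
  · obtain ⟨y, z, hyz, hside, hM_yz⟩ := hcompat
    obtain ⟨x, hx⟩ := hopp y
    obtain ⟨F, hF, hyF, hzF, hxF⟩ := hM.exists_mem_mFacets_avoiding hM_yz x
    exact ⟨x, y, z, hyz, hside, hx, F, hF, hxF, hyF, hzF⟩
  · push Not at hcompat
    obtain ⟨y, z, hyz, hside⟩ := hedge
    obtain ⟨e, he, hye, -⟩ := hcompat y z hyz hside
    obtain ⟨x, rfl⟩ := Sym2.mem_iff_exists.1 hye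
    have hM_yx : ∀ e ∈ M, y ∈ e → x ∈ e := fun e' he' hye' ↦
      hM.1.eq_of_mem he he' hye hye' ▸ Sym2.mem_mk_right y x
    have hx : side x ≠ side y := fun hxy ↦ by
      obtain ⟨e', he', hye', hxe'⟩ := hcompat y x (hM.1.1 he) hxy.symm
      exact hxe' (hM_yx e' he' hye')
    obtain ⟨F, hF, hyF, hxF, hzF⟩ := hM.exists_mem_mFacets_avoiding hM_yx z
    exact ⟨x, y, z, hyz, hside, hx, F, hF, hxF, hyF, hzF⟩

lemma insert_triangle_mem_mFacets {x y z v : V} {F : Finset V}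
    (hcross : ∀ a b, side a ≠ side b → G.Adj a b) (hyz : G.Adj y z) (hside : side y = side z)
    (hx : side x ≠ side y) (hF : F ∈ mFacets G k) (hxF : x ∉ F) (hyF : y ∉ F) (hzF : z ∉ F)
    (hv : v ∉ insert x (insert y (insert z F))) :
    insert v (insert x (insert y (insert z F))) ∈ mFacets G (k + 2) := by
  have hxy : x ≠ y := fun h ↦ hx (congrArg side h)
  have hxz : x ≠ z := fun h ↦ hx ((congrArg side h).trans hside.symm)
  simp only [Finset.mem_insert, not_or] at hv
  obtain ⟨hv_ne_x, hvy, hvz, hvF⟩ := hv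
  by_cases hvx : side v = side x
  · have hxzF : insert x (insert z F) ∈ mFacets G (k + 1) :=
      insert_insert_mem_mFacets hF (hcross x z (hside ▸ hx)) hxF hzF
    rw [Finset.insert_comm x y]
    exact insert_insert_mem_mFacets hxzF (hcross v y (hvx ▸ hx)) (by simp [*])
      (by simp [hxy.symm, hyz.ne, hyF])
  · have hyzF : insert y (insert z F) ∈ mFacets G (k + 1) :=
      insert_insert_mem_mFacets hF hyz hyF hzF
    exact insert_insert_mem_mFacets hyzF (hcross v x hvx) (by simp [*]) (by simp [*])

theorem exists_card_eq_forall_insert_mem_mFacets {M : Finset (Sym2 V)}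
    (hM : IsKMatching G M (k + 2)) (hcross : ∀ a b, side a ≠ side b → G.Adj a b)
    (hopp : ∀ y, ∃ x, side x ≠ side y) (hedge : ∃ y z, G.Adj y z ∧ side y = side z) :
    ∃ C : Finset V, C.card = 2 * k + 3 ∧ ∀ v ∉ C, insert v C ∈ mFacets G (k + 2) := by
  obtain ⟨x, y, z, hyz, hside, hx, F, hF, hxF, hyF, hzF⟩ :=
    exists_triangle_disjoint_mem_mFacets hM hopp hedge
  have hxy : x ≠ y := fun h ↦ hx (congrArg side h)
  have hxz : x ≠ z := fun h ↦ hx ((congrArg side h).trans hside.symm)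
  refine ⟨insert x (insert y (insert z F)), ?_, fun v hv ↦
    insert_triangle_mem_mFacets hcross hyz hside hx hF hxF hyF hzF hv⟩
  rw [Finset.card_insert_of_notMem (by simp [*]),
    Finset.card_insert_of_notMem (by simp [hyz.ne, hyF]), Finset.card_insert_of_notMem hzF,
    sized_mFacets G k hF]

end TwoSides

theorem exists_well_ordered_facet_cover_general {V : Type*} [Fintype V] [DecidableEq V]
    (G : SimpleGraph V)
    (hnotbip : ¬ ∃ A : Set V, ∀ x y, G.Adj x y ↔ ((x ∈ A ∧ y ∉ A) ∨ (x ∉ A ∧ y ∈ A)))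
    (hdisc : ¬ Gᶜ.Connected) (k : ℕ) (hk2 : 2 ≤ k) (hk : k ≤ matchNum G) :
    ∃ L : List (Finset V), L.length = Fintype.card V - 2 * k + 1 ∧
      IsWellOrderedFacetCover (mFacets G k) L := by
  obtain ⟨j, rfl⟩ := Nat.exists_eq_add_of_le' hk2
  obtain ⟨M, hM⟩ := exists_isKMatching_of_le_matchNum hk
  have hcardV : 2 * (j + 2) ≤ Fintype.card V :=
    (sized_mFacets G (j + 2) ⟨M, hM, rfl⟩).symm.trans_le (Finset.card_le_univ (mVerts M))
  have : Nonempty V := Fintype.card_pos_iff.1 (by omega)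
  obtain ⟨side, hcross, hopp, hedge⟩ := exists_sides_of_not_connected_compl hdisc hnotbip
  obtain ⟨C, hCcard, hC⟩ := exists_card_eq_forall_insert_mem_mFacets hM hcross hopp hedge
  have hcompl : Cᶜ.card = Fintype.card V - 2 * (j + 2) + 1 := by
    rw [Finset.card_compl]
    omega
  have hne : Cᶜ.Nonempty := Finset.card_pos.1 (by omega)
  rw [← hcompl]
  exact exists_isWellOrderedFacetCover_of_forall_insert_mem
    (sized_mFacets G (j + 2)).isAntichain hne hC

/-- Let `G` be a graph on `[n]` with no isolated vertices,
`ν(G) ≥ 2`, not complete bipartite, with disconnected complement, and let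
`2 ≤ k ≤ ν(G)`. Then the facet complex `Δ` of `I(G)^{[k]}` admits a well-ordered
facet cover `F_1, …, F_{n−2k+1}`: a minimal facet cover such that every other
facet `H` satisfies `F_i ⊆ H ∪ F_{i+1} ∪ ⋯ ∪ F_m` for some `i ≤ m − 1`. -/
theorem exists_well_ordered_facet_cover {n : ℕ} (G : SimpleGraph (Fin n))
    (hiso : ∀ v : Fin n, ∃ w, G.Adj v w)
    (hnu : 2 ≤ matchNum G)
    (hnotbip : ¬ ∃ A : Set (Fin n), ∀ x y : Fin n,
      G.Adj x y ↔ ((x ∈ A ∧ y ∉ A) ∨ (x ∉ A ∧ y ∈ A)))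
    (hdisc : ¬ (Gᶜ).Connected)
    (k : ℕ) (hk2 : 2 ≤ k) (hk : k ≤ matchNum G) :
    ∃ L : List (Finset (Fin n)),
      L.length = n - 2 * k + 1 ∧ L.Nodup ∧
      (∀ F ∈ L, F ∈ mFacets G k) ∧
      (∀ v : Fin n, (∃ H ∈ mFacets G k, v ∈ H) → ∃ F ∈ L, v ∈ F) ∧
      (∀ F ∈ L, ¬ ∀ v : Fin n, (∃ H ∈ mFacets G k, v ∈ H) →
        ∃ F' ∈ L, F' ≠ F ∧ v ∈ F') ∧
      (∀ H ∈ mFacets G k, H ∉ L → ∃ i : Fin L.length, (i : ℕ) + 2 ≤ L.length ∧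
        ∀ x ∈ L.get i, x ∈ H ∨ ∃ F ∈ L.drop ((i : ℕ) + 1), x ∈ F) := by
  obtain ⟨L, hlength, hL⟩ := exists_well_ordered_facet_cover_general G hnotbip hdisc k hk2 hk
  exact ⟨L, by simpa using hlength, hL.nodup, hL.mem_facets, hL.covers, hL.minimal,
    hL.well_ordered⟩
end
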